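/- Fix integers k ≥ r ≥ 3, an alphabet size q ≥ 2, an output length l with 1 ≤ l ≤ k−1, and for each n local functions f_1,…,f_m : [q]^k → [q]^l that are all (r−1)-wise independent. Let u ∈ ω(1) ∩ o(n), let μ < μ_c(k,r) be a constant, and set m = ⌈μ·n^{r−1}/u(n)^{r−2}⌉. Generate the bipartite graph from the random ensemble, let x* ∈ [q]^n be any planted assignment, set y_a = f_a(x*|_{∂(a)}) for each a, and consider the local marginal polytope LOCAL for these constraints with the additional requirement that b_i(x*_i) = 1 for i = 1,…,u(n). Then there is a constant c > 0 such that, for all sufficiently large n, with probability at least 1 − exp(−c·u(n)) there exists a zero-optimal point of LOCAL whose integral part has size less than (1 + 1/(r−2))·u(n); in particular the LP relaxation cannot determine u(n)/(r−2) input variables beyond the u(n) known ones. -/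

import Mathlib

open Filter Finset Asymptotics

noncomputable section

/-- Neighborhood `∂(a)` of constraint `a` in the bipartite graph given by `ω`. -/
def nbhd {n m k : ℕ} (ω : Fin m → (Fin k ↪ Fin n)) (a : Fin m) : Finset (Fin n) :=
  Finset.univ.image (ω a)

/-- `V` is a `d`-stopping set: every constraint meets `V` in `0` or at least `d` variables. -/
def IsStoppingSet {n m k : ℕ} (d : ℕ) (ω : Fin m → (Fin k ↪ Fin n))
    (V : Finset (Fin n)) : Prop :=
  ∀ a : Fin m, (nbhd ω a ∩ V).card = 0 ∨ d ≤ (nbhd ω a ∩ V).card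

/-- Probability of an event under the uniform random bipartite-graph ensemble:
each of the `m` constraints independently picks a uniformly random `k`-tuple of
distinct indices from `{1,…,n}` (an embedding `Fin k ↪ Fin n`). -/
def prG (n m k : ℕ) (P : (Fin m → (Fin k ↪ Fin n)) → Prop) : ℝ :=
  letI := Classical.decPred P
  ((Finset.univ.filter P).card : ℝ) / (Fintype.card (Fin m → (Fin k ↪ Fin n)) : ℝ)

/-- `u ∈ ω(1) ∩ o(n)`. -/
def UGood (u : ℕ → ℕ) : Prop :=
  Tendsto (fun n => (u n : ℝ)) atTop atTop ∧
    Tendsto (fun n => (u n : ℝ) / (n : ℝ)) atTop (nhds 0)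

/-- `μ_c(k,r) = binom(k,r)⁻¹ (r-2)^(r-2) / (r (r-1)^(r-1))`. -/
def muc (k r : ℕ) : ℝ :=
  ((k.choose r : ℝ))⁻¹ * (((r : ℝ) - 2) ^ (r - 2) / ((r : ℝ) * ((r : ℝ) - 1) ^ (r - 1)))

/-- `φ_{k,r}(μ,λ,τ) = μ (e^{(k-r+1)λ} - 1) binom(k,r-1) (1+τ)^{r-1} - λτ`. -/
def phiE (k r : ℕ) (μ lam τ : ℝ) : ℝ :=
  μ * (Real.exp (((k : ℝ) - (r : ℝ) + 1) * lam) - 1) * (k.choose (r - 1) : ℝ)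
      * (1 + τ) ^ (r - 1)
    - lam * τ

/-- Membership in the local marginal polytope LOCAL: each `B a` is a distribution on
`[q]^k`, each `b i` is a distribution on `[q]`, and the marginalization conditions hold. -/
def MemLOCAL {n m q k : ℕ} (nb : Fin m → (Fin k ↪ Fin n))
    (b : Fin n → Fin q → ℝ) (B : Fin m → (Fin k → Fin q) → ℝ) : Prop :=
  (∀ i x, 0 ≤ b i x) ∧ (∀ i, ∑ x, b i x = 1) ∧
  (∀ a z, 0 ≤ B a z) ∧ (∀ a, ∑ z, B a z = 1) ∧
  (∀ (a : Fin m) (j : Fin k) (x : Fin q),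
    b (nb a j) x = ∑ z : Fin k → Fin q, if z j = x then B a z else 0)

/-- A point of LOCAL is zero-optimal if each `B a` is supported on `f_a⁻¹(y_a)`. -/
def ZeroOptimal {m q k l : ℕ} (f : Fin m → (Fin k → Fin q) → (Fin l → Fin q))
    (y : Fin m → Fin l → Fin q) (B : Fin m → (Fin k → Fin q) → ℝ) : Prop :=
  ∀ a z, B a z ≠ 0 → f a z = y a

/-- Integral part of a point of LOCAL. -/
def integralPart {n q : ℕ} (b : Fin n → Fin q → ℝ) : Finset (Fin n) :=
  letI := Classical.decPred fun i : Fin n => ∃ x : Fin q, b i x = 1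
  Finset.univ.filter fun i : Fin n => ∃ x : Fin q, b i x = 1

/-- `f : [q]^k → [q]^l` is `w`-wise independent. -/
def WiseIndep (q k l w : ℕ) (f : (Fin k → Fin q) → (Fin l → Fin q)) : Prop :=
  ∀ T : Finset (Fin k), T.card ≤ w → ∀ xT : Fin k → Fin q, ∀ y : Fin l → Fin q,
    (Finset.univ.filter fun x : Fin k → Fin q =>
        (∀ i ∈ T, x i = xT i) ∧ f x = y).card
      = q ^ (k - T.card - l)

/-- Minimum Hamming distance of a code. -/
def minHammingDist {A : Type*} [DecidableEq A] {k : ℕ} (M : Finset (Fin k → A)) : ℕ :=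
  sInf {d | ∃ x ∈ M, ∃ y ∈ M, x ≠ y ∧ hammingDist x y = d}

/-- `M` is an MDS code of length `k` and dimension `r-1`. -/
def IsMDSCode (A : Type*) [Fintype A] [DecidableEq A] (k r : ℕ)
    (M : Finset (Fin k → A)) : Prop :=
  M.card = Fintype.card A ^ (r - 1) ∧ minHammingDist M = k - r + 2

/-- `f` has MDS inverse image of dimension `r-1`. -/
def HasMDSInv (q k r : ℕ) (f : (Fin k → Fin q) → (Fin (k - r + 1) → Fin q)) : Prop :=
  ∀ y : Fin (k - r + 1) → Fin q,
    IsMDSCode (Fin q) k r (Finset.univ.filter fun x => f x = y)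

instance {n m k : ℕ} (d : ℕ) (ω : Fin m → (Fin k ↪ Fin n)) :
    DecidablePred fun V : Finset (Fin n) => IsStoppingSet d ω V := fun V => by
  unfold IsStoppingSet; infer_instance

/-! Explore the known variables one at a time: the first `u` variables are known, and a constraint
with at least `s = r - 1` explored variables makes its remaining variables, at most `k - s` of them,
known. If the exploration is still running after `T` steps, then `T ≤ u + N (k - s)`, where `N` is
the number of constraints with at least `s` of the `T` explored variables. A constraint that has not
been activated so far is exchangeable under permutations of the unexplored variables, so `N` has the
law it would have for a fixed set of `T` variables; this is a sum of independent indicators, and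
Chernoff's bound shows that for `μ < μ_c` and `T` close to `(1 + 1 / (r - 2)) u` the exploration
stops earlier with the claimed probability.

Once it stops, every constraint has either no variable outside the explored set or at least
`k - s + 1`, hence fewer than `s` inside. Keep the planted values on the explored set and take
uniform beliefs elsewhere: by `(r - 1)`-wise independence they are the marginals of the uniform
distribution on the local assignments that have the right output and the planted explored values. -/

open scoped BigOperators

section Exploration

variable {ι κ V : Type*} [Fintype ι] [Fintype κ] [DecidableEq V]

/-- The number of positions at which the neighbour list `e` of a constraint has an entry in `D`. -/
def hitCount (e : κ ↪ V) (D : Finset V) : ℕ :=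
  #{j | e j ∈ D}

/-- The constraints of `ω` activated by `D`: those with at least `s` neighbours in `D`. -/
def activated (s : ℕ) (ω : ι → κ ↪ V) (D : Finset V) : Finset ι :=
  {a | s ≤ hitCount (ω a) D}

/-- The variables known once those of `U` are given and every constraint activated by `D`
discloses all of its neighbours. -/
def revealed (U : Finset V) (s : ℕ) (ω : ι → κ ↪ V) (D : Finset V) : Finset V :=
  U ∪ (activated s ω D).biUnion fun a => univ.map (ω a)

lemma mem_activated {s : ℕ} {ω : ι → κ ↪ V} {D : Finset V} {a : ι} :
    a ∈ activated s ω D ↔ s ≤ hitCount (ω a) D := by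
  simp only [activated, mem_filter_univ]

lemma hitCount_eq_card_inter (e : κ ↪ V) (D : Finset V) :
    hitCount e D = #(univ.map e ∩ D) := by
  rw [← filter_mem_eq_inter, filter_map, card_map]
  rfl

lemma hitCount_mono (e : κ ↪ V) : Monotone (hitCount e) := fun _ _ h =>
  card_le_card <| monotone_filter_right _ fun _ _ hj => h hj

lemma activated_mono (s : ℕ) (ω : ι → κ ↪ V) : Monotone (activated s ω) := fun _ _ h =>
  monotone_filter_right _ fun a _ ha => ha.trans (hitCount_mono (ω a) h)

lemma revealed_mono (U : Finset V) (s : ℕ) (ω : ι → κ ↪ V) : Monotone (revealed U s ω) :=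
  fun _ _ h => union_subset_union_right <| biUnion_subset_biUnion_of_subset_left _ <|
    activated_mono s ω h

-- `D'` itself is already revealed by `D`, and a constraint activated by `D'` has at most
-- `card κ - s` neighbours outside `D'`.
lemma card_revealed_add_le {U D D' : Finset V} {s : ℕ} {ω : ι → κ ↪ V} (hDD' : D ⊆ D')
    (hD' : D' ⊆ revealed U s ω D) :
    #(revealed U s ω D') + #(activated s ω D) * (Fintype.card κ - s) ≤
      #(revealed U s ω D) + #(activated s ω D') * (Fintype.card κ - s) := by
  classical
  set new := activated s ω D' \ activated s ω D with hnew
  have hcover : revealed U s ω D' ⊆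
      revealed U s ω D ∪ new.biUnion fun a => univ.map (ω a) \ D' := by
    intro i hi
    have := @hD' i
    simp only [hnew, revealed, mem_union, mem_biUnion, Finset.mem_sdiff] at hi this ⊢
    grind
  have hfresh : ∀ a ∈ new, #(univ.map (ω a) \ D') ≤ Fintype.card κ - s := by
    intro a ha
    have hs := mem_activated.1 (Finset.mem_sdiff.1 ha).1
    rw [hitCount_eq_card_inter] at hs
    have hsplit := card_sdiff_add_card_inter (univ.map (ω a)) D'
    rw [card_map, card_univ] at hsplit
    lia
  calc #(revealed U s ω D') + #(activated s ω D) * (Fintype.card κ - s)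
    _ ≤ #(revealed U s ω D) + #new * (Fintype.card κ - s) +
          #(activated s ω D) * (Fintype.card κ - s) := by
        gcongr
        exact (card_le_card hcover).trans <| (card_union_le _ _).trans <|
          Nat.add_le_add_left (card_biUnion_le_card_mul _ _ _ hfresh) _
    _ = #(revealed U s ω D) + #(activated s ω D') * (Fintype.card κ - s) := by
        rw [add_assoc, ← add_mul, hnew, card_sdiff_add_card_eq_card (activated_mono s ω hDD')]

variable [Fintype V]

omit [DecidableEq V] in
lemma exists_explorationStep (K D : Finset V) :
    ∃ D', D ⊆ D' ∧ (#D < Fintype.card V → #D' = #D + 1) ∧ (D ⊂ K → D' ⊆ K) := by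
  classical
  by_cases hDK : D ⊂ K
  · obtain ⟨D', hDD', hD'K, hD'⟩ :=
      exists_subsuperset_card_eq hDK.subset (Nat.le_succ _) (card_lt_card hDK)
    exact ⟨D', hDD', fun _ => hD', fun _ => hD'K⟩
  by_cases hD : #D < Fintype.card V
  · obtain ⟨D', hDD', hD'⟩ := exists_superset_card_eq (Nat.le_succ _) hD
    exact ⟨D', hDD', fun _ => hD', fun h => (hDK h).elim⟩
  · exact ⟨D, Subset.rfl, fun h => (hD h).elim, fun h => (hDK h).elim⟩

/-- One exploration step: `D` grows by one element, which is taken from `K` as long as `K` properly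
contains `D`, and is arbitrary otherwise. -/
def explorationStep (K D : Finset V) : Finset V :=
  (exists_explorationStep K D).choose

/-- The variables explored in the first `t` steps when known variables are explored one at a
time, starting from those of `U`. -/
def explored (U : Finset V) (s : ℕ) (ω : ι → κ ↪ V) : ℕ → Finset V
  | 0 => ∅
  | t + 1 => explorationStep (revealed U s ω (explored U s ω t)) (explored U s ω t)

lemma explored_succ (U : Finset V) (s : ℕ) (ω : ι → κ ↪ V) (t : ℕ) :
    explored U s ω (t + 1) =
      explorationStep (revealed U s ω (explored U s ω t)) (explored U s ω t) := rfl

lemma explored_mono (U : Finset V) (s : ℕ) (ω : ι → κ ↪ V) : Monotone (explored U s ω) :=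
  monotone_nat_of_le_succ fun _ => (exists_explorationStep _ _).choose_spec.1

lemma explored_succ_subset_revealed {U : Finset V} {s : ℕ} {ω : ι → κ ↪ V} {t : ℕ}
    (h : explored U s ω t ⊂ revealed U s ω (explored U s ω t)) :
    explored U s ω (t + 1) ⊆ revealed U s ω (explored U s ω t) :=
  (exists_explorationStep _ _).choose_spec.2.2 h

lemma card_explored (U : Finset V) (s : ℕ) (ω : ι → κ ↪ V) {t : ℕ} (ht : t ≤ Fintype.card V) :
    #(explored U s ω t) = t := by
  induction t with
  | zero => rfl
  | succ t ih =>
    have hcard := ih (Nat.le_of_succ_le ht)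
    exact ((exists_explorationStep _ _).choose_spec.2.1 (hcard.trans_lt ht)).trans
      (congrArg Nat.succ hcard)

lemma explored_subset_revealed_and_card_revealed_le {U : Finset V} {s : ℕ} (hs : 1 ≤ s)
    {ω : ι → κ ↪ V} {T : ℕ}
    (hopen : ∀ t < T, ¬ revealed U s ω (explored U s ω t) ⊆ explored U s ω t) :
    explored U s ω T ⊆ revealed U s ω (explored U s ω T) ∧
      #(revealed U s ω (explored U s ω T)) ≤
        #U + #(activated s ω (explored U s ω T)) * (Fintype.card κ - s) := by
  induction T with
  | zero =>
    have hempty : activated s ω (∅ : Finset V) = ∅ := by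
      simp only [activated, hitCount, notMem_empty, filter_false, card_empty, filter_eq_empty_iff]
      lia
    simp only [explored, revealed, hempty, empty_subset, biUnion_empty, union_empty, card_empty,
      zero_mul, add_zero, le_refl, and_self]
  | succ t ih =>
    obtain ⟨hsub, hcard⟩ := ih fun t' ht' => hopen t' (ht'.trans t.lt_succ_self)
    have hmono := explored_mono U s ω t.le_succ
    have hstep : explored U s ω (t + 1) ⊆ revealed U s ω (explored U s ω t) :=
      explored_succ_subset_revealed ⟨hsub, hopen t t.lt_succ_self⟩
    refine ⟨hstep.trans (revealed_mono U s ω hmono), ?_⟩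
    have := card_revealed_add_le hmono hstep
    lia

-- While no explored set is closed under revelation, the explored variables are among the known
-- ones, whose number is controlled by the number of activated constraints.
lemma exists_revealed_subset_explored_or_card_le {U : Finset V} {s : ℕ} (hs : 1 ≤ s)
    (ω : ι → κ ↪ V) {T : ℕ} (hT : T ≤ Fintype.card V) :
    (∃ t < T, revealed U s ω (explored U s ω t) ⊆ explored U s ω t) ∨
      T ≤ #U + #(activated s ω (explored U s ω T)) * (Fintype.card κ - s) := by
  refine or_iff_not_imp_left.2 fun h => ?_
  push Not at h
  obtain ⟨hsub, hcard⟩ := explored_subset_revealed_and_card_revealed_le hs h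
  calc T = #(explored U s ω T) := (card_explored U s ω hT).symm
    _ ≤ #(revealed U s ω (explored U s ω T)) := card_le_card hsub
    _ ≤ _ := hcard

end Exploration

section Exchangeability

variable {ι κ V : Type*} [Fintype κ] [DecidableEq V]

omit [DecidableEq V] in
lemma exists_perm_fixing_of_card_eq [Finite V] {A B D : Finset V} (hcard : #A = #B) (hA : D ⊆ A)
    (hB : D ⊆ B) :
    ∃ π : Equiv.Perm V, (∀ x, π x ∈ B ↔ x ∈ A) ∧ ∀ x ∈ D, π x = x := by
  classical
  have := Fintype.ofFinite V
  obtain ⟨σ, hσ⟩ := exists_equiv_extend_of_card_eq (α := {x // x ∈ A}) (t := B)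
    (by rw [Fintype.card_coe, hcard]) (s := {x | x.1 ∈ D}) (f := Subtype.val)
    (by simpa only [image_subset_iff, mem_filter_univ] using fun x hx => hB hx)
    Subtype.val_injective.injOn
  refine ⟨σ.extendSubtype, fun x => ⟨?_, σ.extendSubtype_mem x⟩, fun x hx => ?_⟩
  · contrapose
    exact σ.extendSubtype_not_mem x
  · rw [σ.extendSubtype_apply_of_mem x (hA hx)]
    exact hσ ⟨x, hA hx⟩ (mem_filter_univ _ |>.2 hx)

lemma hitCount_trans_perm {A B : Finset V} {π : Equiv.Perm V} (hπ : ∀ x, π x ∈ B ↔ x ∈ A)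
    (e : κ ↪ V) : hitCount (e.trans π.toEmbedding) B = hitCount e A := by
  simp only [hitCount, Function.Embedding.trans_apply, Equiv.coe_toEmbedding, hπ]

/-- `ω` and `ω'` agree on every constraint that is activated by `D` in at least one of them. -/
def AgreeOnActivated (s : ℕ) (D : Finset V) (ω ω' : ι → κ ↪ V) : Prop :=
  ∀ a, s ≤ hitCount (ω a) D ∨ s ≤ hitCount (ω' a) D → ω a = ω' a

/-- `X` depends on `ω` only through the constraints activated by `D ω`. This plays the role of
measurability with respect to the information collected while exploring `D`. -/
def IsAdapted {β : Type*} (s : ℕ) (D : (ι → κ ↪ V) → Finset V) (X : (ι → κ ↪ V) → β) : Prop :=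
  ∀ ω ω', AgreeOnActivated s (D ω) ω ω' → X ω' = X ω

lemma AgreeOnActivated.mono {s : ℕ} {D D' : Finset V} {ω ω' : ι → κ ↪ V}
    (h : AgreeOnActivated s D' ω ω') (hD : D ⊆ D') : AgreeOnActivated s D ω ω' := fun a ha =>
  h a <| ha.imp (·.trans (hitCount_mono _ hD)) (·.trans (hitCount_mono _ hD))

lemma AgreeOnActivated.revealed_eq [Fintype ι] {s : ℕ} {D : Finset V} {ω ω' : ι → κ ↪ V}
    (h : AgreeOnActivated s D ω ω') (U : Finset V) : revealed U s ω' D = revealed U s ω D := by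
  have hact : activated s ω' D = activated s ω D := by
    ext a
    simp only [mem_activated]
    have := h a
    grind
  simp only [revealed, hact]
  exact congrArg _ <| biUnion_congr rfl fun a ha => by rw [h a (.inl (mem_activated.1 ha))]

lemma IsAdapted.mono {β : Type*} {s : ℕ} {D D' : (ι → κ ↪ V) → Finset V} {X : (ι → κ ↪ V) → β}
    (hX : IsAdapted s D X) (hD : ∀ ω, D ω ⊆ D' ω) : IsAdapted s D' X := fun ω ω' h =>
  hX ω ω' (h.mono (hD ω))

section ResampleInactive

/-- Apply `π` to the neighbours of all constraints that are not activated by `D`. -/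
def permuteInactive (s : ℕ) (D : Finset V) (π : Equiv.Perm V) (ω : ι → κ ↪ V) : ι → κ ↪ V :=
  fun a => if s ≤ hitCount (ω a) D then ω a else (ω a).trans π.toEmbedding

variable {s : ℕ} {A B D : Finset V} {π : Equiv.Perm V} {ω : ι → κ ↪ V}

lemma le_hitCount_permuteInactive_iff (hπ : ∀ x, π x ∈ B ↔ x ∈ A) (hA : D ⊆ A) (hB : D ⊆ B)
    (a : ι) : s ≤ hitCount (permuteInactive s D π ω a) B ↔ s ≤ hitCount (ω a) A := by
  unfold permuteInactive
  split_ifs with ha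
  · exact iff_of_true (ha.trans (hitCount_mono _ hB)) (ha.trans (hitCount_mono _ hA))
  · rw [hitCount_trans_perm hπ]

lemma agreeOnActivated_permuteInactive (hπ : ∀ x ∈ D, π x = x) :
    AgreeOnActivated s D ω (permuteInactive s D π ω) := by
  have hπD : ∀ x, π x ∈ D ↔ x ∈ D := fun x =>
    ⟨fun hx => by rwa [π.injective (hπ _ hx)] at hx, fun hx => by rwa [hπ x hx]⟩
  intro a ha
  rw [le_hitCount_permuteInactive_iff hπD Subset.rfl Subset.rfl, or_self] at ha
  exact (if_pos ha).symm

lemma permuteInactive_injective (hπ : ∀ x ∈ D, π x = x) :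
    Function.Injective (permuteInactive s D π : (ι → κ ↪ V) → ι → κ ↪ V) := by
  intro ω₁ ω₂ h
  funext a
  have ha := congrFun h a
  have hagree₁ := agreeOnActivated_permuteInactive (s := s) (ω := ω₁) hπ a
  have hagree₂ := agreeOnActivated_permuteInactive (s := s) (ω := ω₂) hπ a
  by_cases hact : s ≤ hitCount (permuteInactive s D π ω₁ a) D
  · exact (hagree₁ (.inr hact)).trans <| ha.trans (hagree₂ (.inr (ha ▸ hact))).symm
  · have hin₁ : ¬ s ≤ hitCount (ω₁ a) D := fun h => hact (hagree₁ (.inl h) ▸ h)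
    have hin₂ : ¬ s ≤ hitCount (ω₂ a) D := fun h => hact (ha ▸ hagree₂ (.inl h) ▸ h)
    rw [permuteInactive, if_neg hin₁, permuteInactive, if_neg hin₂] at ha
    ext j
    exact π.injective (DFunLike.congr_fun ha j)

end ResampleInactive

variable [Fintype ι] [Fintype V]

lemma AgreeOnActivated.explored_eq {U : Finset V} {s t : ℕ} {ω ω' : ι → κ ↪ V}
    (h : AgreeOnActivated s (explored U s ω t) ω ω') : explored U s ω' t = explored U s ω t := by
  induction t with
  | zero => rfl
  | succ t ih =>
    have ht := h.mono (explored_mono U s ω t.le_succ)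
    rw [explored_succ, explored_succ, ih ht, ht.revealed_eq]

lemma isAdapted_explored (U : Finset V) (s t : ℕ) :
    IsAdapted (ι := ι) (κ := κ) s (explored U s · t) (explored U s · t) :=
  fun _ _ h => h.explored_eq

lemma isAdapted_explored_succ (U : Finset V) (s t : ℕ) :
    IsAdapted (ι := ι) (κ := κ) s (explored U s · t) (explored U s · (t + 1)) := by
  intro ω ω' h
  change explored U s ω' (t + 1) = explored U s ω (t + 1)
  rw [explored_succ, explored_succ, h.explored_eq, h.revealed_eq]

variable [DecidableEq ι]

-- Permuting the inactive constraints by a bijection from `A ω` onto `B ω` that fixes `D ω` is a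
-- bijection of the ensemble, since it changes neither `D ω` nor `A ω` nor `B ω`.
lemma expect_activated_congr {s : ℕ} {A B D : (ι → κ ↪ V) → Finset V} (hD : IsAdapted s D D)
    (hA : IsAdapted s D A) (hB : IsAdapted s D B) (hDA : ∀ ω, D ω ⊆ A ω) (hDB : ∀ ω, D ω ⊆ B ω)
    (hcard : ∀ ω, #(A ω) = #(B ω)) (g : Finset ι → ℝ) :
    𝔼 ω, g (activated s ω (A ω)) = 𝔼 ω, g (activated s ω (B ω)) := by
  choose! π hπ hfix using fun (A B D : Finset V) (h : #A = #B ∧ D ⊆ A ∧ D ⊆ B) =>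
    exists_perm_fixing_of_card_eq h.1 h.2.1 h.2.2
  have hcompat ω : #(A ω) = #(B ω) ∧ D ω ⊆ A ω ∧ D ω ⊆ B ω := ⟨hcard ω, hDA ω, hDB ω⟩
  set Φ : (ι → κ ↪ V) → ι → κ ↪ V := fun ω => permuteInactive s (D ω) (π (A ω) (B ω) (D ω)) ω
  have hagree ω : AgreeOnActivated s (D ω) ω (Φ ω) :=
    agreeOnActivated_permuteInactive (hfix _ _ _ (hcompat ω))
  have hΦ : Function.Injective Φ := by
    intro ω₁ ω₂ h
    have hDeq : D ω₁ = D ω₂ := by rw [← hD _ _ (hagree ω₁), h, hD _ _ (hagree ω₂)]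
    have hAeq : A ω₁ = A ω₂ := by rw [← hA _ _ (hagree ω₁), h, hA _ _ (hagree ω₂)]
    have hBeq : B ω₁ = B ω₂ := by rw [← hB _ _ (hagree ω₁), h, hB _ _ (hagree ω₂)]
    refine permuteInactive_injective (hfix _ _ _ (hcompat ω₁)) (h.trans ?_)
    simp only [Φ, hDeq, hAeq, hBeq]
  refine Fintype.expect_bijective Φ (Finite.injective_iff_bijective.1 hΦ) _ _ fun ω => ?_
  congr 1
  ext a
  rw [mem_activated, mem_activated, hB ω _ (hagree ω),
    le_hitCount_permuteInactive_iff (hπ _ _ _ (hcompat ω)) (hDA ω) (hDB ω)]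

theorem expect_activated_eq_of_isAdapted_explored (U : Finset V) (s : ℕ) {t : ℕ}
    {D₀ : Finset V} (ht : t ≤ #D₀) {X : (ι → κ ↪ V) → Finset V}
    (hX : IsAdapted s (explored U s · t) X) (hsub : ∀ ω, explored U s ω t ⊆ X ω)
    (hcard : ∀ ω, #(X ω) = #D₀) (g : Finset ι → ℝ) :
    𝔼 ω, g (activated s ω (X ω)) = 𝔼 ω : ι → κ ↪ V, g (activated s ω D₀) := by
  induction t generalizing X with
  | zero =>
    exact expect_activated_congr (isAdapted_explored U s 0) hX (fun _ _ _ => rfl) hsub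
      (fun _ => empty_subset _) hcard g
  | succ t ih =>
    choose! C hC hCcard using fun (D : Finset V) (h : #D ≤ #D₀) =>
      exists_superset_card_eq h (card_le_univ D₀)
    have hcard_explored (ω : ι → κ ↪ V) : #(explored U s ω (t + 1)) ≤ #D₀ :=
      (card_explored U s ω (ht.trans (card_le_univ D₀))).trans_le ht
    have hadapted : IsAdapted s (explored U s · t) fun ω : ι → κ ↪ V =>
        C (explored U s ω (t + 1)) := fun ω ω' h =>
      congrArg C (isAdapted_explored_succ U s t ω ω' h)
    calc 𝔼 ω, g (activated s ω (X ω))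
      _ = 𝔼 ω, g (activated s ω (C (explored U s ω (t + 1)))) :=
        expect_activated_congr (isAdapted_explored U s (t + 1)) hX
          (hadapted.mono fun ω => explored_mono U s ω t.le_succ) hsub
          (fun ω => hC _ (hcard_explored ω))
          (fun ω => (hcard ω).trans (hCcard _ (hcard_explored ω)).symm) g
      _ = 𝔼 ω : ι → κ ↪ V, g (activated s ω D₀) :=
        ih (t.le_succ.trans ht) hadapted
          (fun ω => (explored_mono U s ω t.le_succ).trans (hC _ (hcard_explored ω)))
          (fun ω => hCcard _ (hcard_explored ω))

lemma expect_activated_explored (U : Finset V) (s : ℕ) (D₀ : Finset V) (g : Finset ι → ℝ) :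
    𝔼 ω : ι → κ ↪ V, g (activated s ω (explored U s ω #D₀)) =
      𝔼 ω : ι → κ ↪ V, g (activated s ω D₀) :=
  expect_activated_eq_of_isAdapted_explored U s le_rfl (isAdapted_explored U s #D₀)
    (fun _ => Subset.rfl) (fun ω => card_explored U s ω (card_le_univ D₀)) g

end Exchangeability

section MomentGeneratingFunction

variable {ι κ V : Type*} [Fintype ι] [Fintype κ] [Fintype V] [DecidableEq V]

-- `(e, x) ↦ (swap (e j) x ∘ e, e j)` is an involution carrying
-- `{e | (insert j J).map e ⊆ D} × V` into `{e | J.map e ⊆ D} × D`.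
lemma card_filter_map_insert_subset_mul_le [DecidableEq κ] (D : Finset V) {J : Finset κ} {j : κ}
    (hj : j ∉ J) :
    #{e : κ ↪ V | (insert j J).map e ⊆ D} * Fintype.card V ≤
      #{e : κ ↪ V | J.map e ⊆ D} * #D := by
  let σ : (κ ↪ V) × V → (κ ↪ V) × V := fun p =>
    (p.1.trans (Equiv.swap (p.1 j) p.2).toEmbedding, p.1 j)
  have hσ : Function.Involutive σ := by
    rintro ⟨e, x⟩
    ext
    · simp only [σ, Function.Embedding.trans_apply, Equiv.coe_toEmbedding, Equiv.swap_apply_left,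
        Equiv.swap_comm x, Equiv.swap_apply_self]
    · simp only [σ, Function.Embedding.trans_apply, Equiv.coe_toEmbedding, Equiv.swap_apply_left]
  rw [← card_univ, ← card_product, ← card_product]
  refine card_le_card_of_injOn σ (fun ⟨e, x⟩ he => ?_) hσ.injective.injOn
  rw [mem_coe, mem_product, mem_filter_univ, map_insert, insert_subset_iff] at he
  obtain ⟨⟨hj_mem, hJ_sub⟩, -⟩ := he
  refine mem_coe.2 <| mem_product.2 ⟨(mem_filter_univ _).2 fun y hy => ?_, hj_mem⟩
  obtain ⟨i, hi, rfl⟩ := Finset.mem_map.1 hy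
  have hij : e i ≠ e j := e.injective.ne fun h => hj (h ▸ hi)
  rw [Function.Embedding.trans_apply, Equiv.coe_toEmbedding]
  by_cases hx : e i = x
  · rwa [hx, Equiv.swap_apply_right]
  · rw [Equiv.swap_apply_of_ne_of_ne hij hx]
    exact hJ_sub (mem_map_of_mem e hi)

lemma dens_filter_map_subset_le (D : Finset V) (J : Finset κ) :
    ({e : κ ↪ V | J.map e ⊆ D} : Finset _).dens ≤ D.dens ^ #J := by
  classical
  induction J using Finset.induction_on with
  | empty => simp only [card_empty, pow_zero, dens_le_one]
  | insert j J hj ih =>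
    rw [card_insert_of_notMem hj, pow_succ]
    refine le_trans ?_ (mul_le_mul_left ih _)
    rcases isEmpty_or_nonempty V with hV | hV
    · have : IsEmpty (κ ↪ V) := ⟨fun e => hV.elim (e j)⟩
      rw [univ_eq_empty, filter_empty, dens_empty]
      exact zero_le
    · rw [dens_eq_card_div_card, dens_eq_card_div_card, dens_eq_card_div_card, div_mul_div_comm,
        mul_comm (Fintype.card (κ ↪ V) : ℚ≥0), ← div_div]
      gcongr
      rw [le_div_iff₀ (by positivity)]
      exact_mod_cast card_filter_map_insert_subset_mul_le D hj

lemma dens_filter_le_hitCount_le (s : ℕ) (D : Finset V) :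
    ({e : κ ↪ V | s ≤ hitCount e D} : Finset _).dens ≤ (Fintype.card κ).choose s * D.dens ^ s := by
  classical
  have hcover : ({e : κ ↪ V | s ≤ hitCount e D} : Finset _) ⊆
      (powersetCard s univ).biUnion fun J => {e : κ ↪ V | J.map e ⊆ D} := by
    intro e he
    obtain ⟨J, hJ, hJs⟩ := exists_subset_card_eq ((mem_filter_univ e).1 he)
    refine mem_biUnion.2 ⟨J, mem_powersetCard_univ.2 hJs, (mem_filter_univ e).2 ?_⟩
    intro y hy
    obtain ⟨i, hi, rfl⟩ := Finset.mem_map.1 hy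
    exact (mem_filter_univ i).1 (hJ hi)
  calc ({e : κ ↪ V | s ≤ hitCount e D} : Finset _).dens
    _ ≤ ∑ J ∈ powersetCard s univ, ({e : κ ↪ V | J.map e ⊆ D} : Finset _).dens :=
      (dens_le_dens hcover).trans dens_biUnion_le
    _ ≤ ∑ _ ∈ powersetCard s (univ : Finset κ), D.dens ^ s :=
      sum_le_sum fun _ hJ => (mem_powersetCard_univ.1 hJ) ▸ dens_filter_map_subset_le D _
    _ = (Fintype.card κ).choose s * D.dens ^ s := by
      rw [sum_const, card_powersetCard, card_univ, nsmul_eq_mul]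

lemma expect_prod_apply [DecidableEq ι] {α : Type*} [Fintype α] (g : α → ℝ) :
    𝔼 ω : ι → α, ∏ a, g (ω a) = (𝔼 x, g x) ^ Fintype.card ι := by
  have hsum := sum_prod_piFinset (ι := ι) (univ : Finset α) fun _ => g
  rw [Fintype.piFinset_univ, prod_const, card_univ] at hsum
  rw [Fintype.expect_eq_sum_div_card, Fintype.expect_eq_sum_div_card, hsum, div_pow,
    Fintype.card_fun, Nat.cast_pow]

lemma expect_ite_le {α : Type*} [Fintype α] (p : α → Prop) [DecidablePred p] (E : ℝ) :
    𝔼 x, (if p x then E else 1) ≤ 1 + (E - 1) * ({x | p x} : Finset α).dens := by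
  have hsplit : (({x | p x} : Finset α).dens : ℝ) + ({x | ¬ p x} : Finset α).dens ≤ 1 := by
    rw [← NNRat.cast_add, dens_filter_add_dens_filter_not_eq_dens]
    exact_mod_cast dens_le_one
  rw [Fintype.expect_eq_sum_div_card, sum_ite, sum_const, sum_const, nsmul_eq_mul, nsmul_eq_mul,
    add_div, mul_one, mul_div_right_comm, ← nnratCast_dens, ← nnratCast_dens]
  linarith

lemma expect_pow_card_activated_le [DecidableEq ι] (s : ℕ) {E : ℝ} (hE : 1 ≤ E) (D : Finset V) :
    𝔼 ω : ι → κ ↪ V, E ^ #(activated s ω D) ≤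
      Real.exp (Fintype.card ι *
        ((E - 1) * ((Fintype.card κ).choose s * ((#D : ℝ) / Fintype.card V) ^ s))) := by
  have hprod (ω : ι → κ ↪ V) :
      E ^ #(activated s ω D) = ∏ a, if s ≤ hitCount (ω a) D then E else 1 := by
    rw [prod_ite, prod_const, prod_const_one, mul_one, activated]
  have hdens : (({e : κ ↪ V | s ≤ hitCount e D} : Finset _).dens : ℝ) ≤
      (Fintype.card κ).choose s * ((#D : ℝ) / Fintype.card V) ^ s := by
    rw [← nnratCast_dens]
    exact_mod_cast dens_filter_le_hitCount_le s D
  simp_rw [hprod]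
  rw [expect_prod_apply (ι := ι) fun e : κ ↪ V => if s ≤ hitCount e D then E else 1,
    Real.exp_nat_mul]
  refine pow_le_pow_left₀ (expect_nonneg fun e _ => by split_ifs <;> linarith) ?_ _
  calc 𝔼 e : κ ↪ V, (if s ≤ hitCount e D then E else 1)
    _ ≤ 1 + (E - 1) * ({e : κ ↪ V | s ≤ hitCount e D} : Finset _).dens := expect_ite_le _ E
    _ ≤ 1 + (E - 1) * ((Fintype.card κ).choose s * ((#D : ℝ) / Fintype.card V) ^ s) := by
      gcongr
    _ ≤ _ := by rw [add_comm]; exact Real.add_one_le_exp _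

end MomentGeneratingFunction

section Probability

variable {n m k : ℕ}

lemma prG_mono {P Q : (Fin m → Fin k ↪ Fin n) → Prop} (h : ∀ ω, P ω → Q ω) :
    prG n m k P ≤ prG n m k Q := by
  classical
  unfold prG
  gcongr
  exact h _

lemma one_sub_prG_not (hkn : k ≤ n) (P : (Fin m → Fin k ↪ Fin n) → Prop) :
    1 - prG n m k (fun ω => ¬ P ω) = prG n m k P := by
  classical
  have : Nonempty (Fin k ↪ Fin n) := ⟨Fin.castLEEmb hkn⟩
  have hcard : (0 : ℝ) < Fintype.card (Fin m → Fin k ↪ Fin n) :=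
    Nat.cast_pos.2 Fintype.card_pos
  rw [prG, prG, sub_eq_iff_eq_add, ← add_div, eq_div_iff hcard.ne', one_mul]
  rw [← card_univ]
  norm_cast
  convert (card_filter_add_card_filter_not (s := univ) P).symm

lemma prG_le_expect {P : (Fin m → Fin k ↪ Fin n) → Prop} {X : (Fin m → Fin k ↪ Fin n) → ℝ}
    (hX : ∀ ω, 0 ≤ X ω) (hPX : ∀ ω, P ω → 1 ≤ X ω) : prG n m k P ≤ 𝔼 ω, X ω := by
  classical
  rw [prG, Fintype.expect_eq_sum_div_card, natCast_card_filter]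
  gcongr with ω
  split_ifs with hω
  exacts [hPX ω hω, hX ω]

lemma isStoppingSet_compl_of_revealed_subset {U S : Finset (Fin n)} {s : ℕ}
    {ω : Fin m → Fin k ↪ Fin n} (h : revealed U s ω S ⊆ S) :
    IsStoppingSet (k - s + 1) ω Sᶜ := by
  intro a
  have hsplit : #(nbhd ω a ∩ S) + #(nbhd ω a ∩ Sᶜ) = k := by
    rw [← sdiff_eq_inter_compl, card_inter_add_card_sdiff, nbhd,
      card_image_of_injective _ (ω a).injective, card_univ, Fintype.card_fin]
  have hhit : hitCount (ω a) S = #(nbhd ω a ∩ S) := by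
    rw [hitCount_eq_card_inter, map_eq_image, nbhd]
  by_cases ha : s ≤ hitCount (ω a) S
  · left
    have hsub : nbhd ω a ⊆ S := by
      rw [nbhd, ← map_eq_image]
      exact (subset_biUnion_of_mem _ (mem_activated.2 ha)).trans
        (subset_union_right.trans h)
    rw [card_eq_zero, ← sdiff_eq_inter_compl, sdiff_eq_empty_iff_subset]
    exact hsub
  · lia

lemma le_card_add_card_activated_mul_of_not_exists_isStoppingSet {U : Finset (Fin n)} {s T : ℕ}
    (hs : 1 ≤ s) (hT : T ≤ n) {ω : Fin m → Fin k ↪ Fin n}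
    (h : ¬ ∃ V, IsStoppingSet (k - s + 1) ω V ∧ Disjoint U V ∧ #Vᶜ < T) :
    T ≤ #U + #(activated s ω (explored U s ω T)) * (k - s) := by
  have hT' : T ≤ Fintype.card (Fin n) := by rwa [Fintype.card_fin]
  have hdich := exists_revealed_subset_explored_or_card_le hs ω hT' (U := U)
  rw [Fintype.card_fin] at hdich
  refine hdich.resolve_left fun ⟨t, htT, hclosed⟩ => h ⟨(explored U s ω t)ᶜ,
    isStoppingSet_compl_of_revealed_subset hclosed,
    disjoint_compl_right_iff.2 (subset_union_left.trans hclosed), ?_⟩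
  rwa [compl_compl, card_explored U s ω (htT.le.trans hT')]

-- Chernoff's bound for the number of constraints activated by the first `T` explored variables:
-- if there is no such `V`, this number is at least `(T - #U) / (k - s)`.
theorem prG_not_exists_isStoppingSet_le (U : Finset (Fin n)) {s T : ℕ} (hs : 1 ≤ s) (hsk : s ≤ k)
    (hT : T ≤ n) {lam : ℝ} (hlam : 0 ≤ lam) :
    prG n m k (fun ω => ¬ ∃ V, IsStoppingSet (k - s + 1) ω V ∧ Disjoint U V ∧ #Vᶜ < T) ≤
      Real.exp (m * ((Real.exp ((k - s) * lam) - 1) * (k.choose s * ((T : ℝ) / n) ^ s)) -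
        lam * (T - #U)) := by
  set E := Real.exp ((k - s) * lam) with hE
  set N : (Fin m → Fin k ↪ Fin n) → ℕ := fun ω => #(activated s ω (explored U s ω T))
  have hks : (0 : ℝ) ≤ k - s := sub_nonneg.2 (Nat.cast_le.2 hsk)
  have hbad : ∀ ω, (¬ ∃ V, IsStoppingSet (k - s + 1) ω V ∧ Disjoint U V ∧ #Vᶜ < T) →
      1 ≤ E ^ N ω * Real.exp (-(lam * (T - #U))) := by
    intro ω hω
    have hN : (T : ℝ) ≤ #U + N ω * (k - s) := by
      rw [← Nat.cast_sub hsk]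
      exact_mod_cast le_card_add_card_activated_mul_of_not_exists_isStoppingSet hs hT hω
    rw [hE, ← Real.exp_nat_mul, ← Real.exp_add]
    refine Real.one_le_exp ?_
    nlinarith
  obtain ⟨D₀, hD₀⟩ : ∃ D₀ : Finset (Fin n), #D₀ = T := by
    simpa only [card_univ, Fintype.card_fin, subset_univ, true_and] using
      exists_subset_card_eq (s := (univ : Finset (Fin n))) (n := T)
        (by rwa [card_univ, Fintype.card_fin])
  have hexchange : 𝔼 ω, E ^ N ω = 𝔼 ω : Fin m → Fin k ↪ Fin n, E ^ #(activated s ω D₀) := by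
    have := expect_activated_explored (ι := Fin m) (κ := Fin k) U s D₀ fun A => E ^ #A
    rwa [hD₀] at this
  have hmgf := expect_pow_card_activated_le (ι := Fin m) (κ := Fin k) s
    (Real.one_le_exp (by positivity) : 1 ≤ E) D₀
  rw [hD₀, Fintype.card_fin, Fintype.card_fin, Fintype.card_fin] at hmgf
  calc prG n m k _
    _ ≤ 𝔼 ω, E ^ N ω * Real.exp (-(lam * (T - #U))) :=
      prG_le_expect (fun ω => by positivity) hbad
    _ = (𝔼 ω : Fin m → Fin k ↪ Fin n, E ^ #(activated s ω D₀)) *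
        Real.exp (-(lam * (T - #U))) := by
      rw [← expect_mul, hexchange]
    _ ≤ _ := by
      rw [sub_eq_add_neg (_ * _) (lam * _), Real.exp_add]
      gcongr

end Probability

section LinearProgram

/-- The weights of the uniform distribution on `A`. -/
def uniformWeight {α : Type*} [DecidableEq α] (A : Finset α) (z : α) : ℝ :=
  if z ∈ A then (#A : ℝ)⁻¹ else 0

section UniformWeight

variable {α : Type*} [DecidableEq α] {A : Finset α} {z : α}

lemma uniformWeight_nonneg : 0 ≤ uniformWeight A z := by
  unfold uniformWeight
  positivity

lemma mem_of_uniformWeight_ne_zero (h : uniformWeight A z ≠ 0) : z ∈ A := by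
  by_contra hz
  exact h (if_neg hz)

lemma sum_ite_uniformWeight [Fintype α] (A : Finset α) (p : α → Prop) [DecidablePred p] :
    ∑ z, (if p z then uniformWeight A z else 0) = #{z ∈ A | p z} / #A := by
  simp only [uniformWeight, ← ite_and, sum_ite, sum_const_zero, add_zero, sum_const, nsmul_eq_mul,
    div_eq_mul_inv]
  congr 3
  ext z
  simp only [mem_filter, mem_univ, true_and, and_comm]

lemma sum_uniformWeight [Fintype α] (hA : A.Nonempty) : ∑ z, uniformWeight A z = 1 := by
  have h := sum_ite_uniformWeight A fun _ => True
  simp only [if_true, filter_true] at h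
  rw [h, div_self (Nat.cast_ne_zero.2 hA.card_pos.ne')]

end UniformWeight

variable {n m q k l w : ℕ}

/-- The local assignments that agree with `x` on `T` and have the same image under `f`. -/
def plantedFiber (f : (Fin k → Fin q) → Fin l → Fin q) (x : Fin k → Fin q) (T : Finset (Fin k)) :
    Finset (Fin k → Fin q) :=
  {z | (∀ i ∈ T, z i = x i) ∧ f z = f x}

section PlantedFiber

variable {f : (Fin k → Fin q) → Fin l → Fin q} {x z : Fin k → Fin q} {T : Finset (Fin k)}
  {j : Fin k}

lemma mem_plantedFiber : z ∈ plantedFiber f x T ↔ (∀ i ∈ T, z i = x i) ∧ f z = f x :=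
  mem_filter_univ z

lemma plantedFiber_nonempty : (plantedFiber f x T).Nonempty :=
  ⟨x, mem_plantedFiber.2 ⟨fun _ _ => rfl, rfl⟩⟩

lemma WiseIndep.card_filter_plantedFiber (hf : WiseIndep q k l w f) (hT : #T < w) (hj : j ∉ T)
    (c : Fin q) : #{z ∈ plantedFiber f x T | z j = c} = q ^ (k - (#T + 1) - l) := by
  have hupdate (z : Fin k → Fin q) :
      (∀ i ∈ T, z i = Function.update x j c i) ↔ ∀ i ∈ T, z i = x i :=
    forall₂_congr fun i hi => by rw [Function.update_of_ne (ne_of_mem_of_not_mem hi hj)]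
  rw [← card_insert_of_notMem hj, ← hf (insert j T) (by rwa [card_insert_of_notMem hj])
    (Function.update x j c) (f x)]
  congr 1
  ext z
  simp only [mem_filter, mem_univ, true_and, mem_plantedFiber, forall_mem_insert,
    Function.update_self, hupdate]
  tauto

lemma WiseIndep.card_plantedFiber (hf : WiseIndep q k l w f) (hT : #T < w) (hj : j ∉ T) :
    #(plantedFiber f x T) = q * q ^ (k - (#T + 1) - l) := by
  rw [card_eq_sum_card_fiberwise (f := fun z => z j) (t := univ) fun _ _ => mem_coe.2 (mem_univ _)]
  simp only [hf.card_filter_plantedFiber hT hj, sum_const, card_univ, Fintype.card_fin, smul_eq_mul]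

lemma WiseIndep.sum_ite_uniformWeight_plantedFiber (hf : WiseIndep q k l w f)
    (hT : T = univ ∨ #T < w) (c : Fin q) :
    ∑ z, (if z j = c then uniformWeight (plantedFiber f x T) z else 0) =
      if j ∈ T then if c = x j then 1 else 0 else (q : ℝ)⁻¹ := by
  have hcard : (#(plantedFiber f x T) : ℝ) ≠ 0 :=
    Nat.cast_ne_zero.2 plantedFiber_nonempty.card_pos.ne'
  rw [sum_ite_uniformWeight]
  split_ifs with hj hc
  · rw [filter_true_of_mem fun z hz => hc ▸ (mem_plantedFiber.1 hz).1 j hj, div_self hcard]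
  · rw [filter_false_of_mem fun z hz h => hc (h.symm.trans ((mem_plantedFiber.1 hz).1 j hj)),
      card_empty, Nat.cast_zero, zero_div]
  · replace hT := hT.resolve_left fun h => hj (h ▸ mem_univ j)
    rw [hf.card_plantedFiber hT hj, Nat.cast_mul] at hcard ⊢
    rw [hf.card_filter_plantedFiber hT hj, div_mul_cancel_right₀ (right_ne_zero_of_mul hcard)]

end PlantedFiber

/-- The beliefs that are uniform on the variables in `V` and certain of the assignment `xs` on the
others. -/
def plantedBelief (V : Finset (Fin n)) (xs : Fin n → Fin q) (i : Fin n) (c : Fin q) : ℝ :=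
  if i ∈ V then (q : ℝ)⁻¹ else if c = xs i then 1 else 0

lemma plantedBelief_nonneg (V : Finset (Fin n)) (xs : Fin n → Fin q) (i : Fin n) (c : Fin q) :
    0 ≤ plantedBelief V xs i c := by
  unfold plantedBelief
  positivity

lemma sum_plantedBelief (V : Finset (Fin n)) (xs : Fin n → Fin q) (i : Fin n) :
    ∑ c, plantedBelief V xs i c = 1 := by
  have hq : (q : ℝ) ≠ 0 := Nat.cast_ne_zero.2 (Fin.pos (xs i)).ne'
  unfold plantedBelief
  split_ifs
  · rw [sum_const, card_univ, Fintype.card_fin, nsmul_eq_mul, mul_inv_cancel₀ hq]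
  · rw [sum_ite_eq' univ (xs i), if_pos (mem_univ _)]

lemma plantedBelief_self {V : Finset (Fin n)} (xs : Fin n → Fin q) {i : Fin n} (hi : i ∉ V) :
    plantedBelief V xs i (xs i) = 1 := by
  rw [plantedBelief, if_neg hi, if_pos rfl]

lemma integralPart_plantedBelief (hq : 1 < q) (V : Finset (Fin n)) (xs : Fin n → Fin q) :
    integralPart (plantedBelief V xs) = Vᶜ := by
  ext i
  simp only [integralPart, mem_filter, mem_univ, true_and, mem_compl]
  refine ⟨?_, fun hi => ⟨xs i, plantedBelief_self xs hi⟩⟩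
  rintro ⟨c, hc⟩ hi
  rw [plantedBelief, if_pos hi, inv_eq_one, Nat.cast_eq_one] at hc
  exact hq.ne' hc

lemma IsStoppingSet.filter_notMem_eq_univ_or_card_lt {ω : Fin m → Fin k ↪ Fin n}
    {V : Finset (Fin n)} (hV : IsStoppingSet (k - w + 1) ω V) (a : Fin m) :
    ({j | ω a j ∉ V} : Finset (Fin k)) = univ ∨ #{j | ω a j ∉ V} < w := by
  have hcard : #(nbhd ω a ∩ V) = #{j | ω a j ∈ V} := by
    rw [nbhd, ← map_eq_image, ← hitCount_eq_card_inter, hitCount]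
  have hsplit := card_filter_add_card_filter_not (s := univ) fun j => ω a j ∈ V
  rw [card_univ, Fintype.card_fin] at hsplit
  refine (hV a).imp (fun h => ?_) fun h => by lia
  rw [hcard, card_eq_zero, filter_eq_empty_iff] at h
  exact filter_true_of_mem h

-- For each constraint take the uniform distribution on the local assignments of the planted output
-- that are planted outside `V`; by independence its marginals on the variables in `V` are uniform.
theorem exists_zeroOptimal_of_isStoppingSet (hq : 1 < q)
    {f : Fin m → (Fin k → Fin q) → Fin l → Fin q} (hf : ∀ a, WiseIndep q k l w (f a))
    (xs : Fin n → Fin q) {ω : Fin m → Fin k ↪ Fin n} {V : Finset (Fin n)}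
    (hV : IsStoppingSet (k - w + 1) ω V) :
    ∃ (b : Fin n → Fin q → ℝ) (B : Fin m → (Fin k → Fin q) → ℝ),
      MemLOCAL ω b B ∧ (∀ i ∉ V, b i (xs i) = 1) ∧
        ZeroOptimal f (fun a => f a fun j => xs (ω a j)) B ∧ integralPart b = Vᶜ := by
  refine ⟨plantedBelief V xs,
    fun a => uniformWeight (plantedFiber (f a) (fun j => xs (ω a j)) {j | ω a j ∉ V}),
    ⟨plantedBelief_nonneg V xs, sum_plantedBelief V xs, fun _ _ => uniformWeight_nonneg,
      fun _ => sum_uniformWeight plantedFiber_nonempty, fun a j c => ?_⟩,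
    fun i hi => plantedBelief_self xs hi,
    fun a z hz => (mem_plantedFiber.1 (mem_of_uniformWeight_ne_zero hz)).2,
    integralPart_plantedBelief hq V xs⟩
  rw [(hf a).sum_ite_uniformWeight_plantedFiber (hV.filter_notMem_eq_univ_or_card_lt a)]
  simp only [plantedBelief, mem_filter_univ, ite_not]

end LinearProgram

section Threshold

variable {k r : ℕ}

lemma muc_pos (hr : 3 ≤ r) (hrk : r ≤ k) : 0 < muc k r := by
  have hchoose : (0 : ℝ) < k.choose r := Nat.cast_pos.2 (Nat.choose_pos hrk)
  have hr' : (3 : ℝ) ≤ r := Nat.ofNat_le_cast.2 hr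
  have hr1 : (0 : ℝ) < r - 1 := by linarith
  have hr2 : (0 : ℝ) < r - 2 := by linarith
  unfold muc
  positivity

lemma muc_mul_choose_mul_pow (hr : 3 ≤ r) (hrk : r ≤ k) :
    muc k r * (k - r + 1) * k.choose (r - 1) * (1 + 1 / (r - 2)) ^ (r - 1) = 1 / ((r : ℝ) - 2) := by
  obtain ⟨p, rfl⟩ := Nat.exists_eq_add_of_le' hr
  have hchoose : (k.choose (p + 3) : ℝ) * (p + 3) = k.choose (p + 2) * (k - (p + 2)) := by
    have h := Nat.choose_succ_right_eq k (p + 2)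
    rify [show p + 2 ≤ k by lia] at h
    linarith
  have hpos : (k.choose (p + 3) : ℝ) ≠ 0 := Nat.cast_ne_zero.2 (Nat.choose_pos hrk).ne'
  have hsub1 : ((p + 3 : ℕ) : ℝ) - 1 = p + 2 := by push_cast; ring
  have hsub2 : ((p + 3 : ℕ) : ℝ) - 2 = p + 1 := by push_cast; ring
  have hbase : 1 + 1 / ((p : ℝ) + 1) = (p + 2) / (p + 1) := by field_simp; ring
  rw [muc, hsub1, hsub2, hbase, div_pow, show p + 3 - 1 = p + 2 from rfl,
    show p + 3 - 2 = p + 1 from rfl]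
  push_cast
  calc _ = ((k.choose (p + 3) : ℝ)⁻¹ * (k.choose (p + 2) * (k - (p + 2)))) *
        (((p : ℝ) + 1) ^ (p + 1) / ((p + 3) * (p + 2) ^ (p + 2)) *
          ((p + 2) ^ (p + 2) / (p + 1) ^ (p + 2))) := by ring
    _ = 1 / ((p : ℝ) + 1) := by
      rw [← hchoose]
      field_simp
      ring

lemma phiE_zero (μ τ : ℝ) : phiE k r μ 0 τ = 0 := by
  simp [phiE]

lemma hasDerivAt_phiE_zero (μ τ : ℝ) :
    HasDerivAt (fun lam => phiE k r μ lam τ)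
      (μ * (k - r + 1) * k.choose (r - 1) * (1 + τ) ^ (r - 1) - τ) 0 := by
  have hexp : HasDerivAt (fun lam : ℝ => Real.exp ((k - r + 1) * lam) - 1) (k - r + 1 : ℝ) 0 := by
    simpa using (((hasDerivAt_id (0 : ℝ)).const_mul (k - r + 1 : ℝ)).exp).sub_const 1
  exact (((hexp.const_mul μ).mul_const _).mul_const _).fun_sub (hasDerivAt_mul_const τ)

-- By `muc_mul_choose_mul_pow`, the derivative at `0` changes sign exactly at `muc k r`.
lemma exists_pos_phiE_neg (hr : 3 ≤ r) (hrk : r ≤ k) {μ : ℝ} (hμ : μ < muc k r) :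
    ∃ lam > 0, phiE k r μ lam (1 / (r - 2)) < 0 := by
  have hr' : (3 : ℝ) ≤ r := Nat.ofNat_le_cast.2 hr
  have hrk' : (r : ℝ) ≤ k := Nat.cast_le.2 hrk
  have hcoeff : (0 : ℝ) < (k - r + 1) * k.choose (r - 1) * (1 + 1 / (r - 2)) ^ (r - 1) := by
    have hchoose : (0 : ℝ) < k.choose (r - 1) := Nat.cast_pos.2 (Nat.choose_pos (by lia))
    have hr2 : (0 : ℝ) < r - 2 := by linarith
    exact mul_pos (mul_pos (by linarith) hchoose) (by positivity)
  have hderiv : μ * (k - r + 1) * k.choose (r - 1) * (1 + 1 / (r - 2)) ^ (r - 1) -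
      1 / ((r : ℝ) - 2) < 0 := by
    have h := mul_lt_mul_of_pos_right hμ hcoeff
    linarith [muc_mul_choose_mul_pow hr hrk]
  obtain ⟨lam, hneg, hlam⟩ :=
    (((hasDerivAt_phiE_zero μ (1 / ((r : ℝ) - 2))).tendsto_slope_zero_right.eventually_lt_const
      hderiv).and self_mem_nhdsWithin).exists
  rw [zero_add, phiE_zero, sub_zero, smul_eq_mul] at hneg
  exact ⟨lam, hlam, (pos_iff_neg_of_mul_neg hneg).1 (inv_pos.2 hlam)⟩

end Threshold

section Asymptotics

variable {k r : ℕ} {u : ℕ → ℕ}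

lemma UGood.eventually_le (hu : UGood u) : ∀ᶠ n in atTop, u n ≤ n := by
  filter_upwards [hu.2.eventually_le_const one_pos, eventually_gt_atTop 0] with n hn hpos
  rwa [div_le_one (Nat.cast_pos.2 hpos), Nat.cast_le] at hn

lemma UGood.eventually_pos (hu : UGood u) : ∀ᶠ n in atTop, 0 < u n :=
  (hu.1.eventually_gt_atTop 0).mono fun _ => Nat.cast_pos.1

lemma UGood.tendsto_pow_succ_div_pow (hu : UGood u) (s : ℕ) :
    Tendsto (fun n : ℕ => (n : ℝ) ^ (s + 1) / (u n : ℝ) ^ s) atTop atTop := by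
  refine tendsto_atTop_mono' _ ?_ tendsto_natCast_atTop_atTop
  filter_upwards [hu.eventually_le, hu.eventually_pos] with n hle hpos
  rw [le_div_iff₀ (by positivity), pow_succ']
  gcongr

lemma tendsto_nat_ceil_mul_div_max {α : Type*} {F : Filter α} {x : α → ℝ} (hx : Tendsto x F atTop)
    (μ : ℝ) : Tendsto (fun i => (⌈μ * x i⌉₊ : ℝ) / x i) F (nhds (max μ 0)) := by
  refine ((tendsto_nat_ceil_mul_div_atTop (le_max_right μ 0)).comp hx).congr' ?_
  filter_upwards [hx.eventually_ge_atTop 0] with i hi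
  obtain h | h := le_total 0 μ
  · simp only [Function.comp_apply, max_eq_left h]
  · simp only [Function.comp_apply, max_eq_right h, zero_mul, Nat.ceil_zero,
      Nat.ceil_eq_zero.2 (mul_nonpos_of_nonpos_of_nonneg h hi)]

lemma tendsto_phiE {α : Type*} {F : Filter α} {x y : α → ℝ} {μ τ : ℝ} (hx : Tendsto x F (nhds μ))
    (hy : Tendsto y F (nhds τ)) (lam : ℝ) :
    Tendsto (fun i => phiE k r (x i) lam (y i)) F (nhds (phiE k r μ lam τ)) :=
  (((hx.mul_const _).mul_const _).mul ((hy.const_add 1).pow _)).sub (hy.const_mul lam)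

lemma mul_phiE_div_pow_div_pow (hr : 2 ≤ r) {n m T v : ℝ} (hn : n ≠ 0) (hv : v ≠ 0) (lam : ℝ) :
    v * phiE k r (m / (n ^ (r - 1) / v ^ (r - 2))) lam (T / v - 1) =
      m * ((Real.exp ((k - (r - 1 : ℕ)) * lam) - 1) * (k.choose (r - 1) * (T / n) ^ (r - 1))) -
        lam * (T - v) := by
  obtain ⟨p, rfl⟩ := Nat.exists_eq_add_of_le' hr
  have hcast : (k : ℝ) - (p + 2 : ℕ) + 1 = k - (p + 1 : ℕ) := by push_cast; ring
  rw [phiE, hcast, add_sub_cancel, show p + 2 - 1 = p + 1 from rfl, show p + 2 - 2 = p from rfl,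
    div_pow, div_pow]
  field_simp
  ring

lemma prG_not_exists_isStoppingSet_le_exp_phiE (hr : 2 ≤ r) (hrk : r ≤ k) {n T : ℕ} (m : ℕ)
    {U : Finset (Fin n)} (hU : U.Nonempty) (hT : T ≤ n) {lam : ℝ} (hlam : 0 ≤ lam) :
    prG n m k (fun ω => ¬ ∃ V, IsStoppingSet (k - (r - 1) + 1) ω V ∧ Disjoint U V ∧ #Vᶜ < T) ≤
      Real.exp (#U * phiE k r (m / ((n : ℝ) ^ (r - 1) / (#U : ℝ) ^ (r - 2))) lam (T / #U - 1)) := by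
  have hn : (n : ℝ) ≠ 0 := Nat.cast_ne_zero.2 (Fin.pos hU.choose).ne'
  rw [mul_phiE_div_pow_div_pow hr hn (Nat.cast_ne_zero.2 hU.card_pos.ne')]
  exact prG_not_exists_isStoppingSet_le U (by lia) (by lia) hT hlam

theorem exists_one_sub_exp_le_prG_exists_isStoppingSet (hr : 3 ≤ r) (hrk : r ≤ k) (hu : UGood u)
    {μ : ℝ} (hμ : μ < muc k r) {m : ℕ → ℕ}
    (hm : Tendsto (fun n => m n / ((n : ℝ) ^ (r - 1) / (u n : ℝ) ^ (r - 2))) atTop (nhds μ)) :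
    ∃ c > (0 : ℝ), ∀ᶠ n in atTop, 1 - Real.exp (-c * u n) ≤
      prG n (m n) k fun ω => ∃ V, IsStoppingSet (k - (r - 1) + 1) ω V ∧
        Disjoint ({i | i < u n} : Finset (Fin n)) V ∧ #Vᶜ < ⌈(1 + 1 / ((r : ℝ) - 2)) * u n⌉₊ := by
  obtain ⟨lam, hlam, hneg⟩ := exists_pos_phiE_neg hr hrk hμ
  set τ : ℝ := 1 / ((r : ℝ) - 2)
  have hτ : 0 ≤ 1 + τ := by
    have hr2 : (0 : ℝ) ≤ r - 2 := by linarith [(Nat.ofNat_le_cast (α := ℝ)).2 hr]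
    positivity
  set T : ℕ → ℕ := fun n => ⌈(1 + τ) * u n⌉₊
  have hTu : Tendsto (fun n => (T n : ℝ) / u n) atTop (nhds (1 + τ)) :=
    (tendsto_nat_ceil_mul_div_atTop hτ).comp hu.1
  have hTn : Tendsto (fun n => (T n : ℝ) / n) atTop (nhds 0) := by
    rw [← mul_zero (1 + τ)]
    refine (hTu.mul hu.2).congr' (hu.eventually_pos.mono fun n hn => ?_)
    exact div_mul_div_cancel₀ (Nat.cast_ne_zero.2 hn.ne')
  have hphi := tendsto_phiE (k := k) (r := r) hm (add_sub_cancel_left 1 τ ▸ hTu.sub_const 1) lam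
  refine ⟨-(phiE k r μ lam τ / 2), by linarith, ?_⟩
  filter_upwards [hphi.eventually_le_const (by linarith : _ < phiE k r μ lam τ / 2),
    hu.eventually_le, hu.eventually_pos, hTn.eventually_le_const one_pos, eventually_ge_atTop k]
    with n hphin hun hu0 hTn hkn
  rw [div_le_one (Nat.cast_pos.2 (by lia)), Nat.cast_le] at hTn
  have hU : #{i : Fin n | i < u n} = u n := by rw [Fin.card_filter_val_lt, min_eq_right hun]
  rw [← one_sub_prG_not hkn, neg_neg, mul_comm]
  refine sub_le_sub_left ((prG_not_exists_isStoppingSet_le_exp_phiE (by lia) hrk (m n)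
    (card_pos.1 (hu0.trans_eq hU.symm)) hTn hlam.le).trans ?_) 1
  rw [hU]
  gcongr

end Asymptotics

/-- Theorem 1 / `thm:main0`: for `(r-1)`-wise independent local functions
and `m = ⌈μ n^{r-1}/u(n)^{r-2}⌉` with `μ < μ_c(k,r)`, with probability `≥ 1 - exp(-c u(n))`
the LP over LOCAL (with the first `u(n)` variables fixed to the planted values) has a
zero-optimal point whose integral part has size `< (1 + 1/(r-2)) u(n)`. -/
theorem stmt0 (k r q l : ℕ) (hr : 3 ≤ r) (hrk : r ≤ k) (hq : 2 ≤ q)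
    (hl1 : 1 ≤ l) (hlk : l ≤ k - 1)
    (u : ℕ → ℕ) (hu : UGood u)
    (μ : ℝ) (hμ : μ < muc k r)
    (m : ℕ → ℕ) (hm : ∀ n, m n = ⌈μ * (n : ℝ) ^ (r - 1) / (u n : ℝ) ^ (r - 2)⌉₊)
    (f : (n : ℕ) → Fin (m n) → (Fin k → Fin q) → (Fin l → Fin q))
    (hf : ∀ n a, WiseIndep q k l (r - 1) (f n a))
    (xs : (n : ℕ) → Fin n → Fin q) :
    ∃ c > (0 : ℝ), ∀ᶠ n in atTop,
      1 - Real.exp (-c * u n) ≤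
        prG n (m n) k (fun ω : Fin (m n) → (Fin k ↪ Fin n) =>
          ∃ (b : Fin n → Fin q → ℝ) (B : Fin (m n) → (Fin k → Fin q) → ℝ),
            MemLOCAL ω b B ∧
            (∀ i : Fin n, (i : ℕ) < u n → b i (xs n i) = 1) ∧
            ZeroOptimal (f n) (fun a => f n a fun j => xs n (ω a j)) B ∧
            ((integralPart b).card : ℝ) < (1 + 1 / ((r : ℝ) - 2)) * u n) := by
  have hm' : Tendsto (fun n => m n / ((n : ℝ) ^ (r - 1) / (u n : ℝ) ^ (r - 2))) atTop
      (nhds (max μ 0)) := by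
    obtain ⟨p, rfl⟩ := Nat.exists_eq_add_of_le' (show 2 ≤ r by lia)
    simp only [hm, mul_div_assoc]
    exact tendsto_nat_ceil_mul_div_max (hu.tendsto_pow_succ_div_pow p) μ
  obtain ⟨c, hc, hprob⟩ :=
    exists_one_sub_exp_le_prG_exists_isStoppingSet hr hrk hu (max_lt hμ (muc_pos hr hrk)) hm'
  refine ⟨c, hc, hprob.mono fun n hn => hn.trans (prG_mono ?_)⟩
  rintro ω ⟨V, hV, hdisj, hcard⟩
  obtain ⟨b, B, hmem, hplanted, hopt, hint⟩ :=
    exists_zeroOptimal_of_isStoppingSet hq (hf n) (xs n) hV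
  refine ⟨b, B, hmem, fun i hi => hplanted i (disjoint_left.1 hdisj (by simpa using hi)), hopt, ?_⟩
  rwa [hint, ← Nat.lt_ceil]
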